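/- Let k ≥ 1, let S_2≀S_k ≤ S_{2k} be the subgroup of permutations mapping each pair {2i−1,2i} (1 ≤ i ≤ k) to some pair {2j−1,2j}, and let H = A_{2k} ∩ (S_2≀S_k) be its subgroup of even permutations. Then the permutation character of S_{2k} on the cosets of H is multiplicity-free if and only if k is odd. Moreover, if k is odd then, regarding S_{2k} as the subgroup of S_{2k+1} fixing 2k+1, the permutation character of S_{2k+1} on the cosets of H is not multiplicity-free. -/

import Mathlib

/-- The permutation character of `G` on the cosets of `H` is multiplicity-free:
every irreducible complex representation of `G` has at most a one-dimensional
subspace of `H`-fixed vectors. -/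
noncomputable def IsMultFree {G : Type} [Group G] (H : Subgroup G) : Prop :=
  ∀ V : FDRep ℂ G, CategoryTheory.Simple V →
    Module.finrank ℂ (Representation.invariants (V.ρ.comp H.subtype)) ≤ 1

/-- The subgroup of permutations preserving the partition of `α` into the fibres of a
colouring `c` (two points get mapped to the same fibre iff they lie in the same fibre). -/
def colorStab {α : Type*} {β : Sort*} (c : α → β) : Subgroup (Equiv.Perm α) where
  carrier := {g | ∀ i j : α, c i = c j ↔ c (g i) = c (g j)}
  one_mem' := by intro i j; simp
  mul_mem' := by
    intro a b ha hb i j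
    simpa [Equiv.Perm.mul_apply] using (hb i j).trans (ha (b i) (b j))
  inv_mem' := by
    intro g hg i j
    simpa using (hg (g⁻¹ i) (g⁻¹ j)).symm

/-- The natural embedding of the symmetric group on `α` into the symmetric group on
`Option α` (one extra point, which is fixed). -/
def optionHom (α : Type*) : Equiv.Perm α →* Equiv.Perm (Option α) where
  toFun e := e.optionCongr
  map_one' := by
    ext x
    cases x <;> simp
  map_mul' a b := by
    ext x
    cases x <;> simp [Equiv.Perm.mul_apply]

/-!
The group `B = S₂ ≀ S_k` is the centralizer of a fixed-point-free involution `τ` with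
`sign τ = (-1) ^ k`, and `H = B ∩ A_{2k}`.

If `k` is odd, Gelfand's trick applies. The pairs of `τ` and of `σ = g τ g⁻¹` have a common
transversal, from which one builds a permutation exchanging `τ` and `σ` by conjugation. Its sign
can be prescribed, because an odd permutation commutes with both involutions. Hence
`g⁻¹ ∈ H g H` for every `g`, so the operators by which the double cosets of `H` act on the
`H`-fixed vectors commute, and in an irreducible representation they are scalars.

Otherwise one applies Mackey's criterion to the trivial and the sign character of `B`, which agree
on `H`. If the sign is trivial on `B ∩ g B g⁻¹` for some `g`, then the double coset of `g` gives a
nonzero map between the representations induced by the two characters; a common constituent has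
two independent `H`-fixed vectors. For `g` one takes a cycle along a transversal `E` of `τ`.
Then `x ∈ B ∩ g B g⁻¹` either preserves `E` or exchanges it with its complement, so `x` or `τ x`
is of the form `p τ p τ⁻¹`, and `x` is even when `τ` is. With one extra point fixed by `τ`, which is
added to `E`, the intersection is even trivial.
-/

section Gelfand

open Representation

variable {k G V : Type*} [Field k] [Group G] [AddCommGroup V] [Module k V]
  (ρ : Representation k G V)

theorem span_orbit_eq_top [ρ.IsIrreducible] {v : V} (hv : v ≠ 0) :
    Submodule.span k (Set.range fun g => ρ g v) = ⊤ := by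
  let U : Subrepresentation ρ :=
    { toSubmodule := Submodule.span k (Set.range fun g => ρ g v)
      apply_mem_toSubmodule := fun g u hu => by
        refine (Submodule.span_le (p := (Submodule.span k _).comap (ρ g))).2 ?_ hu
        rintro _ ⟨x, rfl⟩
        exact Submodule.subset_span ⟨g * x, by simp⟩ }
  have hvU : v ∈ U.toSubmodule := Submodule.subset_span ⟨1, by simp⟩
  rcases eq_bot_or_eq_top U with hU | hU
  · rw [hU] at hvU
    exact absurd ((Submodule.mem_bot k).1 hvU) hv
  · exact congrArg Subrepresentation.toSubmodule hU

variable (H : Subgroup G) [Fintype H] [Invertible (Fintype.card H : k)]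

theorem averageMap_subgroup_apply (v : V) :
    averageMap (ρ.comp H.subtype) v = ⅟(Fintype.card H : k) • ∑ h : H, ρ h v := by
  simp [GroupAlgebra.average]

theorem averageMap_subgroup_apply_mem {h : G} (hh : h ∈ H) (v : V) :
    averageMap (ρ.comp H.subtype) (ρ h v) = averageMap (ρ.comp H.subtype) v := by
  rw [averageMap_subgroup_apply, averageMap_subgroup_apply]
  congr 1
  refine Fintype.sum_equiv (Equiv.mulRight (⟨h, hh⟩ : H)) _ _ fun x => ?_
  rw [← Module.End.mul_apply, ← map_mul]
  rfl

/-- The projection of a representation `ρ` onto its subspace of `H`-fixed vectors. -/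
noncomputable def invariantsProj : V →ₗ[k] invariants (ρ.comp H.subtype) :=
  (averageMap (ρ.comp H.subtype)).codRestrict _ (averageMap_invariant _)

/-- The operator by which the double coset `H x H` acts on the `H`-fixed vectors of `ρ`,
normalised so that `H` itself acts as the identity. -/
noncomputable def heckeOperator (x : G) : Module.End k (invariants (ρ.comp H.subtype)) :=
  invariantsProj ρ H ∘ₗ ρ x ∘ₗ Submodule.subtype _

theorem invariantsProj_surjective : Function.Surjective (invariantsProj ρ H) := by
  intro w
  refine ⟨w, Subtype.ext ?_⟩
  exact averageMap_id (ρ.comp H.subtype) (w : V) w.2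

theorem coe_heckeOperator_apply (x : G) (w : invariants (ρ.comp H.subtype)) :
    (heckeOperator ρ H x w : V) = averageMap (ρ.comp H.subtype) (ρ x w) :=
  rfl

theorem heckeOperator_mul_mul {a b : G} (ha : a ∈ H) (hb : b ∈ H) (x : G) :
    heckeOperator ρ H (a * x * b) = heckeOperator ρ H x := by
  ext w
  have hw : ρ b w = w := w.2 ⟨b, hb⟩
  simp only [coe_heckeOperator_apply, map_mul, Module.End.mul_apply, hw,
    averageMap_subgroup_apply_mem ρ H ha]

theorem heckeOperator_mul (x y : G) : heckeOperator ρ H x * heckeOperator ρ H y =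
    ⅟(Fintype.card H : k) • ∑ h : H, heckeOperator ρ H (x * h * y) := by
  ext w
  rw [Module.End.mul_apply, coe_heckeOperator_apply, coe_heckeOperator_apply,
    averageMap_subgroup_apply ρ H (ρ y w)]
  simp only [map_smul, map_sum, LinearMap.smul_apply, LinearMap.sum_apply, Submodule.coe_smul,
    Submodule.coe_sum, coe_heckeOperator_apply, map_mul, Module.End.mul_apply]

variable {H}

theorem heckeOperator_commute (hH : ∀ g : G, ∃ a ∈ H, ∃ b ∈ H, g⁻¹ = a * g * b) (x y : G) :
    Commute (heckeOperator ρ H x) (heckeOperator ρ H y) := by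
  have hinv (g : G) : heckeOperator ρ H g⁻¹ = heckeOperator ρ H g := by
    obtain ⟨a, ha, b, hb, hg⟩ := hH g
    rw [hg, heckeOperator_mul_mul ρ H ha hb]
  calc heckeOperator ρ H x * heckeOperator ρ H y
      = ⅟(Fintype.card H : k) • ∑ h : H, heckeOperator ρ H (y⁻¹ * (h⁻¹ : H) * x⁻¹) := by
        rw [heckeOperator_mul]
        congr! 2 with h
        rw [← hinv]
        simp [mul_assoc]
    _ = heckeOperator ρ H y⁻¹ * heckeOperator ρ H x⁻¹ := by
        rw [heckeOperator_mul]
        congr 1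
        exact Equiv.sum_comp (Equiv.inv H) fun h : H => heckeOperator ρ H (y⁻¹ * h * x⁻¹)
    _ = heckeOperator ρ H y * heckeOperator ρ H x := by rw [hinv, hinv]

theorem span_heckeOperator_eq_top [ρ.IsIrreducible] {w : invariants (ρ.comp H.subtype)}
    (hw : w ≠ 0) : Submodule.span k (Set.range fun x => heckeOperator ρ H x w) = ⊤ := by
  have hrange : (Set.range fun x => heckeOperator ρ H x w) =
      invariantsProj ρ H '' Set.range fun x => ρ x w := by
    rw [← Set.range_comp]
    rfl
  rw [hrange, ← Submodule.map_span, span_orbit_eq_top ρ (by simpa using hw), Submodule.map_top,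
    LinearMap.range_eq_top.2 (invariantsProj_surjective ρ H)]

theorem exists_heckeOperator_eq_smul [IsAlgClosed k] [FiniteDimensional k V] [ρ.IsIrreducible]
    [Nontrivial (invariants (ρ.comp H.subtype))]
    (hH : ∀ g : G, ∃ a ∈ H, ∃ b ∈ H, g⁻¹ = a * g * b) (x : G) :
    ∃ c : k, ∀ w, heckeOperator ρ H x w = c • w := by
  obtain ⟨c, hc⟩ := Module.End.exists_eigenvalue (heckeOperator ρ H x)
  obtain ⟨u, hu⟩ := hc.exists_hasEigenvector
  have hspan : Submodule.span k (Set.range fun y => heckeOperator ρ H y u) ≤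
      Module.End.eigenspace (heckeOperator ρ H x) c := by
    rw [Submodule.span_le]
    rintro _ ⟨y, rfl⟩
    have hxy := congr($((heckeOperator_commute ρ hH x y).eq) u)
    simp only [Module.End.mul_apply, hu.apply_eq_smul, map_smul] at hxy
    exact Module.End.mem_eigenspace_iff.2 hxy
  rw [span_heckeOperator_eq_top ρ hu.2, top_le_iff] at hspan
  exact ⟨c, fun w => Module.End.mem_eigenspace_iff.1 (hspan ▸ Submodule.mem_top)⟩

theorem finrank_invariants_le_one_of_forall_inv_mem_doubleCoset [IsAlgClosed k]
    [FiniteDimensional k V] [ρ.IsIrreducible]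
    (hH : ∀ g : G, ∃ a ∈ H, ∃ b ∈ H, g⁻¹ = a * g * b) :
    Module.finrank k (invariants (ρ.comp H.subtype)) ≤ 1 := by
  rcases subsingleton_or_nontrivial (invariants (ρ.comp H.subtype)) with _ | _
  · simp [Module.finrank_zero_of_subsingleton]
  obtain ⟨v, hv⟩ := exists_ne (0 : invariants (ρ.comp H.subtype))
  have hspan : Submodule.span k (Set.range fun x => heckeOperator ρ H x v) ≤
      Submodule.span k {v} := by
    rw [Submodule.span_le]
    rintro _ ⟨x, rfl⟩
    obtain ⟨c, hc⟩ := exists_heckeOperator_eq_smul ρ hH x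
    exact Submodule.mem_span_singleton.2 ⟨c, (hc v).symm⟩
  rw [span_heckeOperator_eq_top ρ hv, top_le_iff] at hspan
  exact finrank_le_one v fun w => Submodule.mem_span_singleton.1 (hspan ▸ Submodule.mem_top)

end Gelfand

section Irreducible

open CategoryTheory Representation

theorem isIrreducible_of_simple {k G : Type*} [Field k] [Monoid G] (V : FDRep k G) [Simple V] :
    IsIrreducible V.ρ where
  exists_pair_ne := by
    refine ⟨⊥, ⊤, fun h => id_nonzero V ?_⟩
    ext v
    have hv : v ∈ (⊥ : Subrepresentation V.ρ).toSubmodule := by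
      rw [h]
      exact Submodule.mem_top
    exact (Submodule.mem_bot k).1 hv
  eq_bot_or_eq_top U := by
    let ι : FDRep.of U.toRepresentation ⟶ V :=
      ⟨InducedCategory.homMk (ModuleCat.ofHom U.toSubmodule.subtype), fun _ => rfl⟩
    have : Mono ι := ConcreteCategory.mono_of_injective ι Subtype.val_injective
    by_cases hι : ι = 0
    · refine Or.inl (Subrepresentation.toSubmodule_injective ((Submodule.eq_bot_iff _).2 ?_))
      intro v hv
      exact congr($hι ⟨v, hv⟩)
    · have : IsIso ι := isIso_of_mono_of_nonzero hι
      refine Or.inr (Subrepresentation.toSubmodule_injective (Submodule.eq_top_iff'.2 ?_))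
      intro v
      obtain ⟨u, rfl⟩ := (ConcreteCategory.bijective_of_isIso ι).2 v
      exact u.2

theorem asAlgebraHom_ofModule' {k G : Type*} [CommSemiring k] [Monoid G] (M : Type*)
    [AddCommMonoid M] [Module k M] [Module (MonoidAlgebra k G) M]
    [IsScalarTower k (MonoidAlgebra k G) M] :
    asAlgebraHom (ofModule' M : Representation k G M) = Algebra.lsmul k k M :=
  Equiv.apply_symm_apply _ _

theorem isIrreducible_ofModule' {k G : Type*} [Field k] [Monoid G] (M : Type*)
    [AddCommGroup M] [Module k M] [Module (MonoidAlgebra k G) M]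
    [IsScalarTower k (MonoidAlgebra k G) M] [IsSimpleModule (MonoidAlgebra k G) M] :
    (ofModule' M : Representation k G M).IsIrreducible := by
  rw [irreducible_iff_isSimpleModule_asModule]
  let e : (ofModule' M : Representation k G M).asModule ≃ₗ[MonoidAlgebra k G] M :=
    { (ofModule' M : Representation k G M).asModuleEquiv with
      map_smul' := fun r x =>
        congr($(asAlgebraHom_ofModule' M) r ((ofModule' M).asModuleEquiv x)) }
  exact IsSimpleModule.congr e

universe u

variable {k G : Type u} [Field k] [Group G] [Finite G] [NeZero (Nat.card G : k)]

theorem simple_of_isIrreducible [IsAlgClosed k] {V : Type u} [AddCommGroup V] [Module k V]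
    [FiniteDimensional k V] (ρ : Representation k G V) [ρ.IsIrreducible] :
    Simple (FDRep.of ρ) := by
  rw [FDRep.simple_iff_end_is_rank_one,
    ← (linHom.invariantsEquivFDRepHom (FDRep.of ρ) (FDRep.of ρ)).finrank_eq]
  exact (invariantsEquivIntertwiningMap ρ ρ).finrank_eq.trans
    (IsIrreducible.finrank_intertwiningMap_self ρ)

theorem exists_isIrreducible_asAlgebraHom_ne_zero {a : MonoidAlgebra k G} (ha : a ≠ 0) :
    ∃ (V : Type u) (_ : AddCommGroup V) (_ : Module k V) (_ : FiniteDimensional k V)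
      (ρ : Representation k G V), ρ.IsIrreducible ∧ asAlgebraHom ρ a ≠ 0 := by
  obtain ⟨m, hm, ham⟩ : ∃ m : Submodule (MonoidAlgebra k G) (MonoidAlgebra k G),
      IsCoatom m ∧ a ∉ m := by
    by_contra! h
    refine ha ((Submodule.mem_bot (MonoidAlgebra k G)).1 ?_)
    rw [← IsSemisimpleModule.jacobson_eq_bot (MonoidAlgebra k G) (MonoidAlgebra k G)]
    exact Submodule.mem_sInf.2 h
  have hsimple : IsSimpleModule (MonoidAlgebra k G) (MonoidAlgebra k G ⧸ m) :=
    isSimpleModule_iff_isCoatom.2 hm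
  have hfin : FiniteDimensional k (MonoidAlgebra k G ⧸ m) :=
    Module.Finite.of_surjective (m.mkQ.restrictScalars k) m.mkQ_surjective
  refine ⟨_, inferInstance, inferInstance, hfin, ofModule' (MonoidAlgebra k G ⧸ m),
    isIrreducible_ofModule' _, fun h => ham ?_⟩
  rw [asAlgebraHom_ofModule'] at h
  simpa [← Submodule.Quotient.mk_smul] using congr($h (m.mkQ 1))

end Irreducible

section IsMultFree

open Representation

variable {G : Type} [Group G] {H B : Subgroup G}

theorem isMultFree_of_forall_inv_mem_doubleCoset [Finite H]
    (hH : ∀ g : G, ∃ a ∈ H, ∃ b ∈ H, g⁻¹ = a * g * b) : IsMultFree H := by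
  intro V hV
  have := Fintype.ofFinite H
  have := invertibleOfNonzero (Nat.cast_ne_zero.2 Fintype.card_ne_zero : (Fintype.card H : ℂ) ≠ 0)
  have := isIrreducible_of_simple V
  exact finrank_invariants_le_one_of_forall_inv_mem_doubleCoset V.ρ hH

theorem IsMultFree.finrank_invariants_le_one [Finite G] (hH : IsMultFree H) {V : Type}
    [AddCommGroup V] [Module ℂ V] [FiniteDimensional ℂ V] (ρ : Representation ℂ G V)
    [ρ.IsIrreducible] : Module.finrank ℂ (invariants (ρ.comp H.subtype)) ≤ 1 :=
  hH (FDRep.of ρ) (simple_of_isIrreducible ρ)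

end IsMultFree

section Mackey

open Representation

theorem eq_zero_or_eq_zero_of_finrank_invariants_le_one {k G V : Type*} [Field k] [Group G]
    [AddCommGroup V] [Module k V] [FiniteDimensional k V] {ρ : Representation k G V}
    {H B : Subgroup G} (hHB : H ≤ B) (hdim : Module.finrank k (invariants (ρ.comp H.subtype)) ≤ 1)
    {χ : B →* kˣ} (hχH : ∀ b : B, (b : G) ∈ H → χ b = 1) (hχ : χ ≠ 1) {v w : V}
    (hv : ∀ b : B, ρ b v = v) (hw : ∀ b : B, ρ b w = χ b • w) : v = 0 ∨ w = 0 := by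
  by_contra! ⟨hv0, hw0⟩
  let v' : invariants (ρ.comp H.subtype) := ⟨v, fun h => hv ⟨h, hHB h.2⟩⟩
  let w' : invariants (ρ.comp H.subtype) := ⟨w, fun h =>
    (hw ⟨h, hHB h.2⟩).trans (by rw [hχH _ h.2, one_smul])⟩
  have hv' : v' ≠ 0 := fun h => hv0 congr($h)
  have hpos : 0 < Module.finrank k (invariants (ρ.comp H.subtype)) :=
    Module.finrank_pos_iff_exists_ne_zero.2 ⟨v', hv'⟩
  obtain ⟨c, hc⟩ := exists_smul_eq_of_finrank_eq_one (le_antisymm hdim hpos) hv' w'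
  have hcv : c • v = w := congr($hc)
  refine hχ (MonoidHom.ext fun b => Units.ext (smul_left_injective k hw0 ?_))
  calc (χ b : k) • w = ρ b w := (hw b).symm
    _ = w := by rw [← hcv, map_smul, hv b]
    _ = ((1 : B →* kˣ) b : k) • w := by simp

variable {k G : Type*} [Field k] [Group G] {B : Subgroup G} [Fintype B]

/-- The unnormalised idempotent `∑ b ∈ B, χ(b)⁻¹ b` of the group algebra attached to a linear
character `χ` of a subgroup `B`. -/
noncomputable def charSum (χ : B →* kˣ) : MonoidAlgebra k G :=
  ∑ b : B, MonoidAlgebra.single (b : G) ((χ b)⁻¹ : kˣ).val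

theorem single_mul_charSum (χ : B →* kˣ) (b : B) :
    MonoidAlgebra.single (b : G) 1 * charSum χ = χ b • charSum χ := by
  simp only [charSum, Finset.mul_sum, Finset.smul_sum, MonoidAlgebra.single_mul_single]
  refine Fintype.sum_equiv (Equiv.mulLeft b) _ _ fun x => ?_
  simp [Units.smul_def, mul_left_comm (χ b : k)]

theorem asAlgebraHom_charSum_mul {V : Type*} [AddCommGroup V] [Module k V]
    (ρ : Representation k G V) (χ : B →* kˣ) (a : MonoidAlgebra k G) (b : B) (v : V) :
    ρ b (asAlgebraHom ρ (charSum χ * a) v) = χ b • asAlgebraHom ρ (charSum χ * a) v := by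
  have h : ρ b = asAlgebraHom ρ (MonoidAlgebra.single (b : G) 1) := by simp
  rw [h, ← Module.End.mul_apply, ← map_mul, ← mul_assoc, single_mul_charSum]
  simp [Units.smul_def]

theorem charSum_mul_single_mul_charSum_one_ne_zero [CharZero k] {χ : B →* kˣ} {g : G}
    (hg : ∀ b : B, g⁻¹ * b * g ∈ B → χ b = 1) :
    charSum χ * (MonoidAlgebra.single g 1 * charSum (1 : B →* kˣ)) ≠ 0 := by
  classical
  have hone (p : B × B) (hp : (p.1 : G) * (g * p.2) = g) : χ p.1 = 1 := by
    rw [← inv_eq_one, ← map_inv]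
    refine hg _ ?_
    convert p.2.2
    rw [InvMemClass.coe_inv, mul_assoc, inv_mul_eq_iff_eq_mul, inv_mul_eq_iff_eq_mul, hp]
  have hcoeff : (charSum χ * (MonoidAlgebra.single g 1 * charSum (1 : B →* kˣ))).coeff g =
      ((Finset.univ.filter fun p : B × B => (p.1 : G) * (g * p.2) = g).card : k) := by
    rw [Finset.card_filter, Nat.cast_sum, Fintype.sum_prod_type_right]
    simp only [charSum, Finset.mul_sum, Finset.sum_mul, MonoidAlgebra.single_mul_single,
      MonoidAlgebra.coeff_sum, Finsupp.finsetSum_apply, MonoidAlgebra.coeff_single,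
      Finsupp.single_apply]
    refine Finset.sum_congr rfl fun b' _ => Finset.sum_congr rfl fun b _ => ?_
    split_ifs with hb
    · simp [hone (b, b') hb]
    · simp
  intro h
  rw [h, MonoidAlgebra.coeff_zero, Finsupp.zero_apply, eq_comm, Nat.cast_eq_zero,
    Finset.card_eq_zero, Finset.filter_eq_empty_iff] at hcoeff
  exact hcoeff (Finset.mem_univ (1, 1)) (by simp)

theorem not_isMultFree_of_character {G : Type} [Group G] [Finite G] {H B : Subgroup G}
    (hHB : H ≤ B) {χ : B →* ℂˣ} (hχH : ∀ b : B, (b : G) ∈ H → χ b = 1) (hχ : χ ≠ 1) {g : G}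
    (hg : ∀ b : B, g⁻¹ * b * g ∈ B → χ b = 1) : ¬ IsMultFree H := by
  intro hH
  have := Fintype.ofFinite B
  have ha : charSum χ * (MonoidAlgebra.single g 1 * charSum (1 : B →* ℂˣ)) ≠ 0 :=
    charSum_mul_single_mul_charSum_one_ne_zero hg
  obtain ⟨V, _, _, _, ρ, _, hρ⟩ := exists_isIrreducible_asAlgebraHom_ne_zero ha
  refine hρ (LinearMap.ext fun u => ?_)
  have hv (b : B) : ρ b (asAlgebraHom ρ (charSum (1 : B →* ℂˣ)) u) =
      asAlgebraHom ρ (charSum (1 : B →* ℂˣ)) u := by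
    simpa using asAlgebraHom_charSum_mul ρ (1 : B →* ℂˣ) 1 b u
  rcases eq_zero_or_eq_zero_of_finrank_invariants_le_one hHB (hH.finrank_invariants_le_one ρ)
    hχH hχ hv (fun b : B => asAlgebraHom_charSum_mul ρ χ _ b u) with h | h
  · simp [h]
  · exact h


theorem not_isMultFree_of_sign {α : Type} [Fintype α] [DecidableEq α]
    {H B : Subgroup (Equiv.Perm α)} (hHB : H ≤ B) (hH : H ≤ alternatingGroup α)
    (hB : ¬ B ≤ alternatingGroup α) {g : Equiv.Perm α}
    (hg : ∀ x ∈ B, g⁻¹ * x * g ∈ B → Equiv.Perm.sign x = 1) : ¬ IsMultFree H := by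
  let χ : B →* ℂˣ := (Units.map (Int.castRingHom ℂ).toMonoidHom).comp
    (Equiv.Perm.sign.comp B.subtype)
  have hχ (b : B) : χ b = 1 ↔ Equiv.Perm.sign (b : Equiv.Perm α) = 1 :=
    map_eq_one_iff _ (Units.map_injective (Int.cast_injective (α := ℂ)))
  obtain ⟨b, hb, hb1⟩ := SetLike.not_le_iff_exists.1 hB
  refine not_isMultFree_of_character hHB (χ := χ) (fun x hx => (hχ x).2 (hH hx)) (fun h => hb1 ?_)
    fun x hx => (hχ x).2 (hg x x.2 hx)
  exact Equiv.Perm.mem_alternatingGroup.2 ((hχ ⟨b, hb⟩).1 congr($h ⟨b, hb⟩))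

end Mackey

section Matching

open Equiv Function

variable {α : Type*} {E : Set α} {τ σ τ' σ' : Perm α}

/-- Read an involution `τ` without fixed points as the perfect matching `{i, τ i}` of `α`.
A transversal of it is a set containing exactly one of the two points of each pair. -/
def IsTransversal (E : Set α) (τ : Perm α) : Prop :=
  ∀ i, τ i ∈ E ↔ i ∉ E

theorem inv_eq_self_of_involutive (hτ : Involutive τ) : τ⁻¹ = τ :=
  Involutive.symm_eq_self_of_involutive τ hτ

theorem mul_inv_eq_of_involutive (hτ : Involutive τ) (hσ : Involutive σ) :
    (τ * σ)⁻¹ = σ * τ := by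
  rw [mul_inv_rev, inv_eq_self_of_involutive hτ, inv_eq_self_of_involutive hσ]

theorem not_sameCycle_mul (hτ : Involutive τ) (hσ : Involutive σ) (hτf : ∀ i, τ i ≠ i)
    (hσf : ∀ i, σ i ≠ i) (i : α) : ¬ (τ * σ).SameCycle i (τ i) := by
  -- `τ` inverts `τ * σ`; split `n` in half to find a point fixed by `τ` or by `σ`.
  rintro ⟨n, hn⟩
  have hconj (m : ℤ) : τ (((τ * σ) ^ m) i) = ((τ * σ) ^ (n - m)) i := by
    have hτc : SemiconjBy τ (τ * σ) (τ * σ)⁻¹ := by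
      rw [mul_inv_eq_of_involutive hτ hσ]
      ext i
      simp [hτ _]
    rw [sub_eq_neg_add, zpow_add, Perm.mul_apply, hn, zpow_neg, ← inv_zpow]
    exact congr($(hτc.zpow_right m) i)
  rcases n.even_or_odd' with ⟨m, rfl | rfl⟩
  · refine hτf (((τ * σ) ^ m) i) ?_
    rw [hconj]
    congr 2
    ring
  · refine hσf (((τ * σ) ^ m) i) (τ.injective ?_)
    rw [hconj, ← Perm.mul_apply, ← Perm.mul_apply, ← zpow_one_add]
    congr 2
    ring

theorem exists_isTransversal (hτ : Involutive τ) (hσ : Involutive σ) (hτf : ∀ i, τ i ≠ i)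
    (hσf : ∀ i, σ i ≠ i) : ∃ E : Set α, IsTransversal E τ ∧ IsTransversal E σ := by
  let s := Perm.SameCycle.setoid (τ * σ)
  obtain ⟨_, _⟩ := exists_wellFoundedLT (Quotient s)
  have hne (i : α) : (⟦i⟧ : Quotient s) ≠ ⟦τ i⟧ := fun h =>
    not_sameCycle_mul hτ hσ hτf hσf i (Quotient.exact h)
  have hτσ (i : α) : (⟦τ (σ i)⟧ : Quotient s) = ⟦i⟧ :=
    Quotient.sound (Perm.SameCycle.rfl.apply_left)
  have hσ' (i : α) : (⟦σ i⟧ : Quotient s) = ⟦τ i⟧ := by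
    simpa [hσ i] using (hτσ (σ i)).symm
  refine ⟨{i | (⟦i⟧ : Quotient s) < ⟦τ i⟧}, fun i => ?_, fun i => ?_⟩
  · simp [hτ i, lt_iff_le_and_ne, hne, (hne i).symm]
  · simp [hτσ, hσ', lt_iff_le_and_ne, hne, (hne i).symm]

theorem exists_perm_extending (hτ : Involutive τ) (hτ' : Involutive τ') (hE : IsTransversal E τ)
    (hE' : IsTransversal E τ') (π : Perm E) :
    ∃ y : Perm α, (∀ e : E, y e = π e) ∧ (∀ i, y i ∈ E ↔ i ∈ E) ∧ y * τ = τ' * y := by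
  classical
  let φ : {i // i ∉ E} ≃ E := τ.subtypeEquiv fun i => (hE i).symm
  let φ' : E ≃ {i // i ∉ E} := τ'.subtypeEquiv fun i => by simp [hE' i]
  let y : Perm α := Perm.subtypeCongr π (φ.trans (π.trans φ'))
  have hy (e : E) : y e = π e := Perm.subtypeCongr.left_apply_subtype _ _ e
  have hyn (i : α) (hi : i ∉ E) : y i = τ' (π ⟨τ i, (hE i).2 hi⟩) :=
    Perm.subtypeCongr.right_apply _ _ hi
  refine ⟨y, hy, fun i => ?_, ?_⟩
  · by_cases hi : i ∈ E
    · simp [hi, hy ⟨i, hi⟩]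
    · simp [hi, hyn i hi, hE' _]
  · ext i
    by_cases hi : i ∈ E
    · have hτi : τ i ∉ E := fun h => (hE i).1 h hi
      simp [hyn _ hτi, hτ i, hy ⟨i, hi⟩]
    · simp [hyn i hi, hτ' _, hy ⟨τ i, (hE i).2 hi⟩]

theorem isConj_inv_self [Finite α] (p : Perm α) : IsConj p p⁻¹ := by
  classical
  have := Fintype.ofFinite α
  rw [Perm.isConj_iff_cycleType_eq, Perm.cycleType_inv]

theorem exists_perm_of_mul_eq_inv [Finite α] (hτ : Involutive τ) (hσ : Involutive σ)
    (hτ' : Involutive τ') (hσ' : Involutive σ') (hEτ : IsTransversal E τ)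
    (hEσ : IsTransversal E σ) (hEτ' : IsTransversal E τ') (h : τ' * σ' = (τ * σ)⁻¹) :
    ∃ y : Perm α, (∀ i, y i ∈ E ↔ i ∈ E) ∧ y * τ = τ' * y ∧ y * σ = σ' * y := by
  let p : Perm E := (τ * σ).subtypePerm fun i => by simp [hEτ (σ i), hEσ i]
  obtain ⟨π, hπ⟩ := isConj_iff.1 (isConj_inv_self p)
  obtain ⟨y, hy, hyE, hyτ⟩ := exists_perm_extending hτ hτ' hEτ hEτ' π
  have hyστ {i : α} (hi : i ∈ E) : y (τ (σ i)) = τ' (σ' (y i)) :=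
    calc y (τ (σ i)) = π (p ⟨i, hi⟩) := hy (p ⟨i, hi⟩)
      _ = p⁻¹ (π ⟨i, hi⟩) := by rw [← hπ]; simp
      _ = (τ * σ)⁻¹ (π ⟨i, hi⟩) := rfl
      _ = τ' (σ' (y i)) := by rw [← h, ← hy ⟨i, hi⟩]; rfl
  have hyσ {i : α} (hi : i ∈ E) : y (σ i) = σ' (y i) := by
    refine τ'.injective ?_
    rw [← hyστ hi]
    exact (congr($hyτ (σ i))).symm
  refine ⟨y, hyE, hyτ, Equiv.ext fun i => ?_⟩
  by_cases hi : i ∈ E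
  · exact hyσ hi
  · have h := hyσ ((hEσ i).2 hi)
    rw [hσ i] at h
    exact hσ'.eq_iff.1 h.symm

variable [Fintype α] [DecidableEq α]

theorem sign_eq_one_of_commute (hτ : Involutive τ) (hE : IsTransversal E τ) {x : Perm α}
    (hx : Commute x τ) (hxE : ∀ i, x i ∈ E ↔ i ∈ E) : Perm.sign x = 1 := by
  classical
  let p : Perm α := Perm.ofSubtype (x.subtypePerm hxE)
  have hp {i : α} (hi : i ∈ E) : p i = x i := Perm.ofSubtype_apply_of_mem _ hi
  have hpn {i : α} (hi : i ∉ E) : p i = i := Perm.ofSubtype_apply_of_not_mem _ hi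
  have hxτ (i : α) : x (τ i) = τ (x i) := congr($(hx.eq) i)
  have hxp : x = p * (τ * p * τ⁻¹) := by
    ext i
    simp only [inv_eq_self_of_involutive hτ, Perm.mul_apply]
    by_cases hi : i ∈ E
    · rw [hpn (fun h => (hE i).1 h hi), hτ, hp hi]
    · rw [hp ((hE i).2 hi), hxτ, hτ, hpn (by rwa [hxE])]
  rw [hxp]
  simp only [map_mul, map_inv, mul_inv_cancel_comm, Int.units_mul_self]

theorem exists_perm_swapping (hτ : Involutive τ) (hσ : Involutive σ) (hτf : ∀ i, τ i ≠ i)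
    (hσf : ∀ i, σ i ≠ i) (hsign : Perm.sign τ = -1) (s : ℤˣ) :
    ∃ y : Perm α, y * τ = σ * y ∧ y * σ = τ * y ∧ Perm.sign y = s := by
  obtain ⟨E, hEτ, hEσ⟩ := exists_isTransversal hτ hσ hτf hσf
  have hconj : Involutive (τ * σ * τ : Perm α) := fun i => by simp [hτ _, hσ _]
  obtain ⟨y, -, hyτ, hyσ⟩ :=
    exists_perm_of_mul_eq_inv hτ hσ hσ hτ hEτ hEσ hEσ (mul_inv_eq_of_involutive hτ hσ).symm
  obtain ⟨z, hzE, hzτ, hzσ⟩ := exists_perm_of_mul_eq_inv hτ hσ hτ hconj hEτ hEσ hEτ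
    ((Equiv.ext fun i => hτ _ : τ * (τ * σ * τ) = σ * τ).trans
      (mul_inv_eq_of_involutive hτ hσ).symm)
  -- `τ * z` is odd and commutes with both `τ` and `σ`.
  have hτzτ : τ * z * τ = τ * (τ * z) := by rw [mul_assoc, hzτ]
  have hτzσ : τ * z * σ = σ * (τ * z) := by
    rw [mul_assoc, hzσ]
    exact Equiv.ext fun i => hτ _
  have hτz : Perm.sign (τ * z) = -1 := by
    rw [map_mul, hsign, sign_eq_one_of_commute hτ hEτ hzτ hzE, mul_one]
  by_cases hy : Perm.sign y = s
  · exact ⟨y, hyτ, hyσ, hy⟩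
  · refine ⟨y * (τ * z), ?_, ?_, ?_⟩
    · rw [mul_assoc, hτzτ, ← mul_assoc, hyτ, mul_assoc]
    · rw [mul_assoc, hτzσ, ← mul_assoc, hyσ, mul_assoc]
    · rw [map_mul, hτz, mul_neg_one, Int.units_ne_iff_eq_neg.1 hy, neg_neg]

end Matching

section Sign

open Equiv Function

variable {α β : Type*} {τ : Perm α}

theorem exists_involutive_of_ncard_fiber_eq_two {c : α → β}
    (hc : ∀ i, (c ⁻¹' {c i}).ncard = 2) :
    ∃ τ : Perm α, Involutive τ ∧ (∀ i, τ i ≠ i) ∧ ∀ i j, c i = c j ↔ j = i ∨ j = τ i := by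
  have hpartner (i : α) : ∃ j, j ≠ i ∧ c ⁻¹' {c i} = {i, j} := by
    obtain ⟨x, y, hxy, h⟩ := Set.ncard_eq_two.1 (hc i)
    have hi : i ∈ ({x, y} : Set α) := h ▸ rfl
    rcases hi with rfl | rfl
    · exact ⟨y, hxy.symm, h⟩
    · exact ⟨x, hxy, h.trans (Set.pair_comm _ _)⟩
  choose t ht hfib using hpartner
  have hct (i j : α) : c i = c j ↔ j = i ∨ j = t i := by
    rw [eq_comm]
    exact Set.ext_iff.1 (hfib i) j
  have htt : Involutive t := fun i => by
    have h := (hct (t i) i).1 ((hct i (t i)).2 (Or.inr rfl)).symm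
    exact (h.resolve_left (ht i).symm).symm
  exact ⟨htt.toPerm, htt, ht, hct⟩

theorem colorStab_eq_centralizer {c : α → β} (hτf : ∀ i, τ i ≠ i)
    (hc : ∀ i j, c i = c j ↔ j = i ∨ j = τ i) : colorStab c = Subgroup.centralizer {τ} := by
  ext g
  rw [Subgroup.mem_centralizer_singleton_iff]
  change (∀ i j, c i = c j ↔ c (g i) = c (g j)) ↔ _
  simp only [hc, g.injective.eq_iff]
  refine ⟨fun h => Equiv.ext fun i => ?_, fun h i j => ?_⟩
  · exact (((h i (τ i)).1 (Or.inr rfl)).resolve_left (hτf i))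
  · have hg : g (τ i) = τ (g i) := congr($h i)
    rw [← hg, g.injective.eq_iff]

variable [Fintype α] [DecidableEq α]

theorem sign_eq_neg_one_pow_of_involutive (hτ : Involutive τ) (hτf : ∀ i, τ i ≠ i) {k : ℕ}
    (hk : Fintype.card α = 2 * k) : Perm.sign τ = (-1) ^ k := by
  have hfixed : IsEmpty (fixedPoints τ) := ⟨fun i => hτf i i.2⟩
  rw [Perm.sign_of_pow_two_eq_one (Equiv.ext hτ), Fintype.card_eq_zero (α := fixedPoints τ),
    Nat.sub_zero, hk, Nat.mul_div_cancel_left k two_pos]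

theorem not_centralizer_le_alternatingGroup (hτ : Involutive τ) {i : α} (hi : τ i ≠ i) :
    ¬ Subgroup.centralizer {τ} ≤ alternatingGroup α := by
  refine SetLike.not_le_iff_exists.2 ⟨swap i (τ i), ?_, ?_⟩
  · rw [Subgroup.mem_centralizer_singleton_iff, mul_swap_eq_swap_mul, hτ, swap_comm]
  · simp [Perm.sign_swap hi.symm]

theorem isMultFree_centralizer_inf_alternatingGroup {α : Type} [Fintype α] [DecidableEq α]
    {τ : Perm α} (hτ : Involutive τ) (hτf : ∀ i, τ i ≠ i) (hsign : Perm.sign τ = -1) :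
    IsMultFree (Subgroup.centralizer {τ} ⊓ alternatingGroup α) := by
  refine isMultFree_of_forall_inv_mem_doubleCoset fun g => ?_
  have hσ : Involutive (g * τ * g⁻¹ : Perm α) := fun i => by simp [hτ _]
  have hσf (i : α) : (g * τ * g⁻¹ : Perm α) i ≠ i := fun h =>
    hτf (g⁻¹ i) (g.injective (by simpa using h))
  obtain ⟨y, hyτ, hyσ, hy⟩ := exists_perm_swapping hτ hσ hτf hσf hsign (Perm.sign g)
  refine ⟨g⁻¹ * y⁻¹, Subgroup.mem_inf.2 ⟨Subgroup.mem_centralizer_singleton_iff.2 ?_, ?_⟩,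
    g⁻¹ * y, Subgroup.mem_inf.2 ⟨Subgroup.mem_centralizer_singleton_iff.2 ?_, ?_⟩, by group⟩
  · calc g⁻¹ * y⁻¹ * τ = g⁻¹ * y⁻¹ * (τ * y) * y⁻¹ := by group
      _ = τ * (g⁻¹ * y⁻¹) := by rw [← hyσ]; group
  · simp [hy]
  · calc g⁻¹ * y * τ = g⁻¹ * (y * τ) := mul_assoc _ _ _
      _ = τ * (g⁻¹ * y) := by rw [hyτ]; group
  · simp [hy]

end Sign

section Cycle

open Equiv Function

variable {α : Type*} {E S : Set α} {τ g : Perm α}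

theorem conj_apply_apply_of_mem (hτ : Involutive τ) (hg : ∀ i ∉ E, g i = i) {i : α}
    (hi : τ i ∉ E) : (g * τ * g⁻¹ : Perm α) (τ i) = g i := by
  have h : g⁻¹ (τ i) = τ i := Perm.inv_eq_iff_eq.2 (hg _ hi).symm
  rw [Perm.mul_apply, Perm.mul_apply, h, hτ]

theorem commute_conj_of_commute {G : Type*} [Group G] {x g t : G} (h : Commute (g⁻¹ * x * g) t) :
    Commute x (g * t * g⁻¹) := by
  simpa [mul_assoc] using (Commute.conj_iff g).2 h

theorem exists_set_mem_or_mem (hτ : Involutive τ) :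
    ∃ E : Set α, (∀ i, i ∈ E ∨ τ i ∈ E) ∧ ∀ i ∈ E, τ i ∈ E → τ i = i := by
  obtain ⟨_, _⟩ := exists_wellFoundedLT α
  refine ⟨{i | i ≤ τ i}, fun i => ?_, fun i hi hτi => ?_⟩
  · simpa [hτ i] using le_total i (τ i)
  · exact le_antisymm (by simpa [hτ i] using hτi) hi

theorem eq_univ_of_isCycleOn [Finite α] (hτ : Involutive τ) (hg : g.IsCycleOn E)
    (hE : ∀ i, i ∈ E ∨ τ i ∈ E) (hSτ : ∀ i ∈ S, τ i ∈ S) (hSg : ∀ i ∈ S, i ∈ E → g i ∈ S)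
    (hS : S.Nonempty) : S = Set.univ := by
  obtain ⟨i, hiS, hiE⟩ : ∃ i ∈ S, i ∈ E := by
    obtain ⟨i, hi⟩ := hS
    exact (hE i).elim (fun h => ⟨i, hi, h⟩) fun h => ⟨τ i, hSτ i hi, h⟩
  have hpow (n : ℕ) : (g ^ n) i ∈ S ∧ (g ^ n) i ∈ E := by
    induction n with
    | zero => exact ⟨hiS, hiE⟩
    | succ n ih =>
      rw [pow_succ', Perm.mul_apply]
      exact ⟨hSg _ ih.1 ih.2, hg.apply_mem_iff.2 ih.2⟩
  have hES : E ⊆ S := fun j hj => by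
    obtain ⟨n, rfl⟩ := hg.exists_pow_eq' E.toFinite hiE hj
    exact (hpow n).1
  refine Set.eq_univ_of_forall fun j => (hE j).elim (@hES j) fun h => ?_
  simpa [hτ j] using hSτ _ (hES h)

theorem sign_eq_one_of_commute_of_isCycleOn [Fintype α] [DecidableEq α] (hτ : Involutive τ)
    (hE : IsTransversal E τ) (hsign : Perm.sign τ = 1) (hg : g.IsCycleOn E)
    (hgE : ∀ i ∉ E, g i = i) {x : Perm α} (hx : Commute x τ) (hxg : Commute (g⁻¹ * x * g) τ) :
    Perm.sign x = 1 := by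
  have hgE' (i : α) : g⁻¹ i ∈ E ↔ i ∈ E := by simpa using (hg.apply_mem_iff (x := g⁻¹ i)).symm
  have hEσ : IsTransversal E (g * τ * g⁻¹) := fun i => by
    simp only [Perm.mul_apply, hg.apply_mem_iff, hE (g⁻¹ i), hgE' i]
  have hclosed {ρ : Perm α} (hρ : IsTransversal E ρ) (hxρ : Commute x ρ) (i : α)
      (hi : x i ∈ E ↔ i ∈ E) : x (ρ i) ∈ E ↔ ρ i ∈ E := by
    rw [show x (ρ i) = ρ (x i) from congr($(hxρ.eq) i), hρ, hρ, hi]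
  by_cases hS : ∃ i, x i ∈ E ↔ i ∈ E
  · have huniv := eq_univ_of_isCycleOn (S := {i | x i ∈ E ↔ i ∈ E}) hτ hg
      (fun i => or_iff_not_imp_left.2 (hE i).2) (hclosed hE hx)
      (fun i hiS hiE => by
        rw [← conj_apply_apply_of_mem hτ hgE fun h => (hE i).1 h hiE]
        exact hclosed hEσ (commute_conj_of_commute hxg) _ (hclosed hE hx i hiS)) hS
    exact sign_eq_one_of_commute hτ hE hx (Set.eq_univ_iff_forall.1 huniv)
  · have hτx : Perm.sign (τ * x) = 1 := by
      refine sign_eq_one_of_commute hτ hE ((Commute.refl τ).mul_left hx) fun i => ?_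
      rw [Perm.mul_apply, hE]
      exact not_iff.1 (not_exists.1 hS i)
    rwa [map_mul, hsign, one_mul] at hτx

theorem not_isMultFree_of_sign_eq_one {α : Type} [Fintype α] [DecidableEq α] [Nonempty α]
    {τ : Perm α} (hτ : Involutive τ) (hτf : ∀ i, τ i ≠ i) (hsign : Perm.sign τ = 1)
    {H : Subgroup (Perm α)} (hH : H ≤ Subgroup.centralizer {τ} ⊓ alternatingGroup α) :
    ¬ IsMultFree H := by
  obtain ⟨E, hE, -⟩ := exists_isTransversal hτ hτ hτf hτf
  obtain ⟨g, hg, hgE⟩ := E.to_countable.exists_cycleOn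
  refine not_isMultFree_of_sign (hH.trans inf_le_left) (hH.trans inf_le_right)
    (not_centralizer_le_alternatingGroup hτ (hτf (Classical.arbitrary α))) (g := g)
    fun x hx hxg => ?_
  rw [Subgroup.mem_centralizer_singleton_iff] at hx hxg
  exact sign_eq_one_of_commute_of_isCycleOn hτ hE hsign hg (fun i => not_imp_comm.1 (@hgE i)) hx
    hxg

theorem eq_one_of_commute_of_isCycleOn [Finite α] {r : α} (hτ : Involutive τ)
    (hr : ∀ i, τ i = i ↔ i = r) (hE : ∀ i, i ∈ E ∨ τ i ∈ E)
    (hEr : ∀ i ∈ E, τ i ∈ E → τ i = i) (hg : g.IsCycleOn E)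
    (hgE : ∀ i ∉ E, g i = i) {x : Perm α} (hx : Commute x τ) (hxg : Commute (g⁻¹ * x * g) τ) :
    x = 1 := by
  have hclosed {ρ : Perm α} (hxρ : Commute x ρ) (i : α) (hi : x i = i) : x (ρ i) = ρ i := by
    rw [show x (ρ i) = ρ (x i) from congr($(hxρ.eq) i), hi]
  have hfix {y : Perm α} (hy : Commute y τ) : y r = r := by
    refine (hr (y r)).1 ?_
    rw [← show y (τ r) = τ (y r) from congr($(hy.eq) r), (hr r).2 rfl]
  have hxgr : x (g r) = g r := Perm.inv_eq_iff_eq.1 (hfix hxg)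
  have huniv := eq_univ_of_isCycleOn (S := {i | x i = i}) hτ hg hE (hclosed hx)
    (fun i hiS hiE => by
      by_cases hi : τ i = i
      · rw [(hr i).1 hi]
        exact hxgr
      · rw [← conj_apply_apply_of_mem hτ hgE fun h => hi (hEr i hiE h)]
        exact hclosed (commute_conj_of_commute hxg) _ (hclosed hx i hiS)) ⟨r, hfix hx⟩
  exact Equiv.ext (Set.eq_univ_iff_forall.1 huniv)

theorem not_isMultFree_of_unique_fixedPoint {α : Type} [Fintype α] [DecidableEq α]
    [Nontrivial α] {τ : Perm α} {r : α} (hτ : Involutive τ) (hr : ∀ i, τ i = i ↔ i = r)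
    {H : Subgroup (Perm α)} (hH : H ≤ Subgroup.centralizer {τ} ⊓ alternatingGroup α) :
    ¬ IsMultFree H := by
  obtain ⟨E, hE, hEr⟩ := exists_set_mem_or_mem hτ
  obtain ⟨g, hg, hgE⟩ := E.to_countable.exists_cycleOn
  obtain ⟨i, hi⟩ := exists_ne r
  refine not_isMultFree_of_sign (hH.trans inf_le_left) (hH.trans inf_le_right)
    (not_centralizer_le_alternatingGroup hτ (mt (hr i).1 hi)) (g := g) fun x hx hxg => ?_
  rw [Subgroup.mem_centralizer_singleton_iff] at hx hxg
  rw [eq_one_of_commute_of_isCycleOn hτ hr hE hEr hg (fun i => not_imp_comm.1 (@hgE i)) hx hxg,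
    map_one]

end Cycle

section Main

open Equiv Function

theorem map_optionHom_le {α : Type*} [Fintype α] [DecidableEq α] (τ : Perm α) :
    (Subgroup.centralizer {τ} ⊓ alternatingGroup α).map (optionHom α) ≤
      Subgroup.centralizer {optionHom α τ} ⊓ alternatingGroup (Option α) := by
  rintro _ ⟨x, ⟨hx, hxa⟩, rfl⟩
  refine Subgroup.mem_inf.2 ⟨Subgroup.mem_centralizer_singleton_iff.2 ?_, ?_⟩
  · rw [← map_mul, Subgroup.mem_centralizer_singleton_iff.1 hx, map_mul]
  · exact (Equiv.optionCongr_sign x).trans hxa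

theorem ncard_fiber_div_two {k : ℕ} (i : Fin (2 * k)) :
    ((fun j : Fin (2 * k) => (j : ℕ) / 2) ⁻¹' {(i : ℕ) / 2}).ncard = 2 := by
  refine Set.ncard_eq_two.2 ⟨⟨2 * (i / 2), by omega⟩, ⟨2 * (i / 2) + 1, by omega⟩, by simp, ?_⟩
  ext j
  simp only [Set.mem_preimage, Set.mem_singleton_iff, Set.mem_insert_iff, Fin.ext_iff]
  omega

theorem stmt10_general {α : Type} {β : Type*} [Fintype α] [DecidableEq α] [Nonempty α]
    (c : α → β) (hc : ∀ i, (c ⁻¹' {c i}).ncard = 2) {k : ℕ} (hk : Fintype.card α = 2 * k) :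
    (IsMultFree (colorStab c ⊓ alternatingGroup α) ↔ Odd k) ∧
      ¬ IsMultFree ((colorStab c ⊓ alternatingGroup α).map (optionHom α)) := by
  obtain ⟨τ, hτ, hτf, hcτ⟩ := exists_involutive_of_ncard_fiber_eq_two hc
  have hsign := sign_eq_neg_one_pow_of_involutive hτ hτf hk
  rw [colorStab_eq_centralizer hτf hcτ]
  refine ⟨⟨fun hH => ?_, fun hodd => ?_⟩, ?_⟩
  · by_contra heven
    exact not_isMultFree_of_sign_eq_one hτ hτf
      (hsign.trans (Nat.not_odd_iff_even.1 heven).neg_one_pow) le_rfl hH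
  · exact isMultFree_centralizer_inf_alternatingGroup hτ hτf (hsign.trans hodd.neg_one_pow)
  · refine not_isMultFree_of_unique_fixedPoint (r := none) (τ := optionHom α τ) ?_ ?_
      (map_optionHom_le τ)
    · rintro (_ | i)
      · rfl
      · exact congrArg some (hτ i)
    · rintro (_ | i)
      · exact iff_of_true rfl rfl
      · exact iff_of_false (fun h => hτf i (Option.some.inj h)) (Option.some_ne_none i)

end Main

theorem stmt10 (k : ℕ) (hk : 1 ≤ k) :
    (IsMultFree ((colorStab (fun i : Fin (2 * k) => (i : ℕ) / 2)) ⊓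
        alternatingGroup (Fin (2 * k))) ↔ Odd k) ∧
      (Odd k →
        ¬ IsMultFree (((colorStab (fun i : Fin (2 * k) => (i : ℕ) / 2)) ⊓
            alternatingGroup (Fin (2 * k))).map (optionHom (Fin (2 * k))))) := by
  have : Nonempty (Fin (2 * k)) := ⟨⟨0, by omega⟩⟩
  have h := stmt10_general _ (ncard_fiber_div_two (k := k)) (Fintype.card_fin _)
  exact ⟨h.1, fun _ => h.2⟩
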